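/- Let k ≥ 2, t ≥ 2, s ≥ 0, and let M_2,...,M_t be arbitrary ordered k-uniform matchings (ordered k-uniform hypergraphs with pairwise disjoint edges). Then OR(G_s^k, M_2,...,M_t) ≤ OR(M_2,...,M_t)^s. -/

import Mathlib

/-- An ordered hypergraph with vertex set `{1, …, n}` (with its natural order)
and edges given as finite sets of vertices. -/
structure OrderedHypergraph where
  n : ℕ
  edges : Finset (Finset ℕ)

/-- An ordered hypergraph `G` is contained in an ordered hypergraph `H` if there is an
injective, order-preserving map from the vertices of `G` to the vertices of `H` such that
edges of `G` map to edges of `H`. -/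
def OrderedHypergraph.Contains (H G : OrderedHypergraph) : Prop :=
  ∃ f : ℕ → ℕ, StrictMono f ∧ (∀ v ∈ Finset.Icc 1 G.n, f v ∈ Finset.Icc 1 H.n) ∧
    ∀ A ∈ G.edges, A.image f ∈ H.edges

/-- The complete `k`-uniform ordered hypergraph `K_N^k` on the vertex set `{1, …, N}`. -/
def completeHG (k N : ℕ) : OrderedHypergraph :=
  ⟨N, Finset.powersetCard k (Finset.Icc 1 N)⟩

/-- The `i`-colored subgraph of `K_N^k` under the coloring `c`. -/
def coloredSubgraph (k N : ℕ) {t : ℕ} (c : Finset ℕ → Fin t) (i : Fin t) : OrderedHypergraph :=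
  ⟨N, (Finset.powersetCard k (Finset.Icc 1 N)).filter fun A => c A = i⟩

/-- The ordered Ramsey number `OR(G 0, …, G (t-1))` of `k`-uniform ordered hypergraphs:
the minimum `N` such that every `t`-coloring of the edges of `K_N^k` contains, for some
color `i`, a copy of `G i` in the `i`-colored subgraph. -/
noncomputable def ORnum (k : ℕ) {t : ℕ} (G : Fin t → OrderedHypergraph) : ℕ :=
  sInf {N | ∀ c : Finset ℕ → Fin t, ∃ i, (coloredSubgraph k N c i).Contains (G i)}

/-- The `(k,ℓ)`-path `P_e^{k,ℓ}` with `e` edges: the ordered `k`-uniform hypergraph on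
vertex set `{1, …, e(k-ℓ)+ℓ}` with edges `A_r = {(r-1)(k-ℓ)+1, …, (r-1)(k-ℓ)+k}`. -/
def loosePath (k l e : ℕ) : OrderedHypergraph :=
  ⟨e * (k - l) + l,
    (Finset.range e).image fun r => Finset.Icc (r * (k - l) + 1) (r * (k - l) + k)⟩


/-- The ordered `k`-uniform hypergraph `G_s^k`, defined iteratively: `G_0^k` is a single
vertex with no edges, and `G_{s+1}^k` (on vertex set `{1, …, k^{s+1}}`) consists of `k`
disjoint consecutive copies of `G_s^k` (copy `j` occupying `{j·k^s + 1, …, (j+1)·k^s}`)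
together with every `k`-element edge having exactly one vertex in each copy. -/
def iterGraph (k : ℕ) : ℕ → OrderedHypergraph
  | 0 => ⟨1, ∅⟩
  | s + 1 =>
      ⟨k ^ (s + 1),
        ((Finset.range k).biUnion fun j =>
            (iterGraph k s).edges.image fun A => A.image fun x => x + j * k ^ s) ∪
          (Finset.powersetCard k (Finset.Icc 1 (k ^ (s + 1)))).filter fun A =>
            ∀ j ∈ Finset.range k,
              (A ∩ Finset.Icc (j * k ^ s + 1) ((j + 1) * k ^ s)).card = 1⟩

/-- `M` is an ordered `k`-uniform matching: each edge is a `k`-element subset of the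
vertex set `{1, …, M.n}`, and the edges are pairwise disjoint. -/
def IsOrderedMatching (k : ℕ) (M : OrderedHypergraph) : Prop :=
  (∀ A ∈ M.edges, A.card = k ∧ A ⊆ Finset.Icc 1 M.n) ∧
    ∀ A ∈ M.edges, ∀ B ∈ M.edges, A ≠ B → Disjoint A B

/-!
With `R = OR(M_2, …, M_t)`, induct on `s`. Split `R ^ (s + 1)` vertices into `R` consecutive blocks
of size `R ^ s`. If no `M_i` occurs in its colour, the induction hypothesis puts a copy of `G_s^k`
of the first colour inside every block. Consider `k`-sets `B` of blocks and the edges that have one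
vertex in each copy lying in a block of `B`. If for some `B` all these edges have the first colour,
they turn the `k` copies of `G_s^k` into a copy of `G_{s+1}^k`. Otherwise colour each `B` with
another colour that occurs among its edges: by the choice of `R` this colouring of the `k`-sets of
blocks contains some `M_i`, and since the edges of a matching are disjoint, the vertices inside the
blocks can be chosen for all edges simultaneously, which lifts this `M_i` to the vertices.
-/

/-- The hypergraph `G` is `k`-uniform on its vertex set `{1, …, G.n}`. -/
def IsUniform (k : ℕ) (G : OrderedHypergraph) : Prop :=
  ∀ A ∈ G.edges, A ∈ Finset.powersetCard k (Finset.Icc 1 G.n)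

/-- `f` embeds `G` order-preservingly into `T` with all edges receiving colour `i`. Unlike in
`OrderedHypergraph.Contains`, the values of `f` outside `{1, …, G.n}` are irrelevant, so that
embeddings can be glued. -/
structure IsMonochromaticCopy {α : Type*} (c : Finset ℕ → α) (T : Set ℕ) (i : α)
    (G : OrderedHypergraph) (f : ℕ → ℕ) : Prop where
  strictMonoOn : StrictMonoOn f (Set.Icc 1 G.n)
  mapsTo : Set.MapsTo f (Set.Icc 1 G.n) T
  color_eq : ∀ A ∈ G.edges, c (A.image f) = i

/-- The Ramsey arrow `N → (G 0, …, G (t - 1))`: every `t`-colouring of the finite subsets of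
`{1, …, N}` has a copy of some `G i` in colour `i`. For `k`-uniform `G i` only the colours of
`k`-sets matter, so `k` is not a parameter. -/
def IsRamsey {t : ℕ} (G : Fin t → OrderedHypergraph) (N : ℕ) : Prop :=
  ∀ c : Finset ℕ → Fin t, ∃ i f, IsMonochromaticCopy c (Set.Icc 1 N) i (G i) f

section Copies

variable {α : Type*} {c : Finset ℕ → α} {S T : Set ℕ} {i : α} {G : OrderedHypergraph}
  {f g : ℕ → ℕ} {k n N t : ℕ}

lemma IsMonochromaticCopy.mono (hf : IsMonochromaticCopy c S i G f) (hST : S ⊆ T) :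
    IsMonochromaticCopy c T i G f :=
  ⟨hf.strictMonoOn, hf.mapsTo.mono_right hST, hf.color_eq⟩

lemma IsMonochromaticCopy.comp (hg : StrictMonoOn g S) (hgT : Set.MapsTo g S T)
    (hf : IsMonochromaticCopy (fun A => c (A.image g)) S i G f) :
    IsMonochromaticCopy c T i G (g ∘ f) where
  strictMonoOn := hg.comp hf.strictMonoOn hf.mapsTo
  mapsTo := hgT.comp hf.mapsTo
  color_eq A hA := by rw [← Finset.image_image]; exact hf.color_eq A hA

lemma image_mem_powersetCard_Icc {A : Finset ℕ} (hf : StrictMonoOn f (Set.Icc 1 n))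
    (hfN : Set.MapsTo f (Set.Icc 1 n) (Set.Icc 1 N))
    (hA : A ∈ Finset.powersetCard k (Finset.Icc 1 n)) :
    A.image f ∈ Finset.powersetCard k (Finset.Icc 1 N) := by
  obtain ⟨hAn, hAk⟩ := Finset.mem_powersetCard.1 hA
  have hAs : (A : Set ℕ) ⊆ Set.Icc 1 n := by simpa using Finset.coe_subset.2 hAn
  refine Finset.mem_powersetCard.2 ⟨Finset.image_subset_iff.2 fun x hx => ?_, ?_⟩
  · exact Finset.mem_Icc.2 (hfN (hAs hx))
  · rw [Finset.card_image_of_injOn (hf.injOn.mono hAs), hAk]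

lemma exists_strictMono_eqOn_Icc (hf : StrictMonoOn f (Set.Icc 1 n))
    (hpos : ∀ v ∈ Set.Icc 1 n, 0 < f v) :
    ∃ g : ℕ → ℕ, StrictMono g ∧ Set.EqOn g f (Set.Icc 1 n) := by
  refine ⟨fun v => if v = 0 then 0 else f (min v n) + (v - n), fun x y hxy => ?_, fun v hv => ?_⟩
  · rcases Nat.eq_zero_or_pos x with rfl | hx
    · have := hpos (min y n)
      simp only [Set.mem_Icc] at this
      simp only [↓reduceIte, hxy.ne']
      omega
    · simp only [hx.ne', (hx.trans hxy).ne', ↓reduceIte]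
      rcases le_or_gt y n with hy | hy
      · have := hf ⟨hx, hxy.le.trans hy⟩ ⟨hx.trans hxy, hy⟩ hxy
        rw [min_eq_left hy, min_eq_left (hxy.le.trans hy)]
        omega
      · rw [min_eq_right hy.le]
        rcases le_or_gt x n with hxn | hxn
        · have := hf.monotoneOn ⟨hx, hxn⟩ ⟨hx.trans_le hxn, le_rfl⟩ hxn
          rw [min_eq_left hxn]
          omega
        · rw [min_eq_right hxn.le]
          omega
  · have hv0 : v ≠ 0 := Nat.one_le_iff_ne_zero.1 hv.1
    simp [hv0, hv.2]

lemma contains_coloredSubgraph_iff {c : Finset ℕ → Fin t} {i : Fin t} (hG : IsUniform k G) :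
    (coloredSubgraph k N c i).Contains G ↔ ∃ f, IsMonochromaticCopy c (Set.Icc 1 N) i G f := by
  constructor
  · rintro ⟨f, hf, hfN, hfE⟩
    exact ⟨f, hf.strictMonoOn _, fun v hv => Finset.mem_Icc.1 (hfN v (Finset.mem_Icc.2 hv)),
      fun A hA => (Finset.mem_filter.1 (hfE A hA)).2⟩
  · rintro ⟨f, hf, hfN, hfE⟩
    obtain ⟨g, hg, hgf⟩ := exists_strictMono_eqOn_Icc hf fun v hv => (hfN hv).1
    refine ⟨g, hg, fun v hv => ?_, fun A hA => ?_⟩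
    · have hv := Finset.mem_Icc.1 hv
      rw [hgf hv]
      exact Finset.mem_Icc.2 (hfN hv)
    · have himage : A.image g = A.image f := Finset.image_congr fun v hv =>
        hgf (Finset.mem_Icc.1 ((Finset.mem_powersetCard.1 (hG A hA)).1 hv))
      rw [himage]
      exact Finset.mem_filter.2 ⟨image_mem_powersetCard_Icc hf hfN (hG A hA), hfE A hA⟩

lemma ORnum_eq_sInf_isRamsey {G : Fin t → OrderedHypergraph} (hG : ∀ i, IsUniform k (G i)) :
    ORnum k G = sInf {N | IsRamsey G N} := by
  simp only [ORnum, IsRamsey, contains_coloredSubgraph_iff (hG _)]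

lemma IsRamsey.of_cons {M : Fin t → OrderedHypergraph} (hG : G.edges.Nonempty)
    (h : IsRamsey (Fin.cons G M : Fin (t + 1) → OrderedHypergraph) N) : IsRamsey M N := by
  intro c
  obtain ⟨i, f, hf⟩ := h fun A => (c A).succ
  cases i using Fin.cases with
  | zero =>
    obtain ⟨A, hA⟩ := hG
    exact absurd (hf.color_eq A hA) (Fin.succ_ne_zero _)
  | succ i =>
    exact ⟨i, f, hf.strictMonoOn, hf.mapsTo, fun A hA => Fin.succ_injective _ (hf.color_eq A hA)⟩

lemma IsOrderedMatching.isUniform (hG : IsOrderedMatching k G) : IsUniform k G :=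
  fun A hA => Finset.mem_powersetCard.2 (hG.1 A hA).symm

end Copies

/-- The `j`-th block, counted from `0`, when `{1, 2, …}` is cut into intervals of length `K`. -/
def block (K j : ℕ) : Set ℕ :=
  Set.Icc (j * K + 1) ((j + 1) * K)

/-- The index `j` of the block of length `K` that contains the vertex `v ≥ 1`. -/
def blockIndex (K v : ℕ) : ℕ :=
  (v - 1) / K

/-- The position, counted from `1`, of the vertex `v ≥ 1` in its block of length `K`. -/
def blockPos (K v : ℕ) : ℕ :=
  (v - 1) % K + 1

section Blocks

variable {K R v x y i j : ℕ}

lemma mem_block_iff_blockIndex_eq (hK : 0 < K) (hv : 1 ≤ v) :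
    v ∈ block K j ↔ blockIndex K v = j := by
  rw [block, blockIndex, Set.mem_Icc, Nat.div_eq_iff hK, add_mul]
  omega

lemma blockIndex_lt (hK : 0 < K) (hv : v ∈ Set.Icc 1 (R * K)) : blockIndex K v < R := by
  rw [blockIndex, Nat.div_lt_iff_lt_mul hK]
  exact Nat.sub_one_lt_of_le hv.1 hv.2

lemma blockPos_mem (hK : 0 < K) : blockPos K v ∈ Set.Icc 1 K :=
  ⟨Nat.le_add_left _ _, Nat.mod_lt _ hK⟩

lemma blockIndex_lt_or_blockPos_lt (hx : 1 ≤ x) (hxy : x < y) :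
    blockIndex K x < blockIndex K y ∨
      blockIndex K x = blockIndex K y ∧ blockPos K x < blockPos K y := by
  have hle : blockIndex K x ≤ blockIndex K y := Nat.div_le_div_right (Nat.sub_le_sub_right hxy.le 1)
  refine hle.lt_or_eq.imp_right fun heq => ⟨heq, ?_⟩
  have hxdiv := Nat.div_add_mod (x - 1) K
  have hydiv := Nat.div_add_mod (y - 1) K
  unfold blockIndex at heq
  unfold blockPos
  rw [← heq] at hydiv
  omega

lemma mapsTo_add_block : Set.MapsTo (· + j * K) (Set.Icc 1 K) (block K j) := fun x hx => by
  simp only [block, Set.mem_Icc, add_mul] at hx ⊢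
  omega

lemma blockIndex_add_mul (hx : x ∈ Set.Icc 1 K) : blockIndex K (x + j * K) = j :=
  (mem_block_iff_blockIndex_eq (hx.1.trans hx.2) (hx.1.trans (Nat.le_add_right _ _))).1
    (mapsTo_add_block hx)

lemma blockPos_add_mul (hx : x ∈ Set.Icc 1 K) : blockPos K (x + j * K) = x := by
  obtain ⟨hx1, hxK⟩ := hx
  rw [blockPos, Nat.sub_add_comm hx1, Nat.add_mul_mod_self_right, Nat.mod_eq_of_lt (by omega),
    Nat.sub_add_cancel hx1]

lemma block_subset_Icc (hj : j < R) : block K j ⊆ Set.Icc 1 (R * K) :=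
  Set.Icc_subset_Icc (Nat.le_add_left _ _) (Nat.mul_le_mul_right K hj)

lemma lt_of_mem_block_of_lt (hij : i < j) (hx : x ∈ block K i) (hy : y ∈ block K j) : x < y :=
  calc
    x ≤ (i + 1) * K := hx.2
    _ ≤ j * K := Nat.mul_le_mul_right K hij
    _ < y := hy.1

lemma IsRamsey.exists_copy_block {t P : ℕ} {G : Fin t → OrderedHypergraph} (h : IsRamsey G P)
    (c : Finset ℕ → Fin t) (j : ℕ) : ∃ i f, IsMonochromaticCopy c (block P j) i (G i) f := by
  obtain ⟨i, f, hf⟩ := h fun A => c (A.image (· + j * P))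
  exact ⟨i, _, hf.comp ((add_left_strictMono (a := j * P)).strictMonoOn _) mapsTo_add_block⟩

end Blocks

section IterGraph

variable {k s : ℕ}

lemma iterGraph_n (k s : ℕ) : (iterGraph k s).n = k ^ s := by
  cases s <;> simp [iterGraph]

lemma iterGraph_zero_edges (k : ℕ) : (iterGraph k 0).edges = ∅ := rfl

lemma mem_iterGraph_succ_edges {A : Finset ℕ} :
    A ∈ (iterGraph k (s + 1)).edges ↔
      (∃ j < k, ∃ A' ∈ (iterGraph k s).edges, A'.image (· + j * k ^ s) = A) ∨
        A ∈ Finset.powersetCard k (Finset.Icc 1 (k * k ^ s)) ∧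
          ∀ j < k, (A ∩ Finset.Icc (j * k ^ s + 1) ((j + 1) * k ^ s)).card = 1 := by
  simp only [iterGraph, Finset.mem_union, Finset.mem_biUnion, Finset.mem_image,
    Finset.mem_filter, Finset.mem_range, pow_succ']

lemma iterGraph_isUniform (k s : ℕ) : IsUniform k (iterGraph k s) := by
  induction s with
  | zero => simp [IsUniform, iterGraph_zero_edges]
  | succ s ih =>
    intro A hA
    rw [iterGraph_n, pow_succ']
    obtain ⟨j, hj, A', hA', rfl⟩ | ⟨hA, -⟩ := mem_iterGraph_succ_edges.1 hA
    · exact image_mem_powersetCard_Icc ((add_left_strictMono (a := j * k ^ s)).strictMonoOn _)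
        (mapsTo_add_block.mono_right (block_subset_Icc hj)) (iterGraph_n k s ▸ ih A' hA')
    · exact hA

lemma iterGraph_succ_edges_nonempty (hk : 0 < k) (s : ℕ) :
    (iterGraph k (s + 1)).edges.Nonempty := by
  induction s with
  | zero =>
    refine ⟨Finset.Icc 1 k, mem_iterGraph_succ_edges.2 (Or.inr ⟨by simp, fun j hj => ?_⟩)⟩
    refine Finset.card_eq_one.2 ⟨j + 1, Finset.ext fun x => ?_⟩
    simp only [Finset.mem_inter, Finset.mem_Icc, Finset.mem_singleton, pow_zero, mul_one]
    omega
  | succ s ih =>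
    obtain ⟨A, hA⟩ := ih
    exact ⟨_, mem_iterGraph_succ_edges.2 (Or.inl ⟨0, hk, A, hA, rfl⟩)⟩

lemma exists_eq_image_range_of_card_inter_block {K : ℕ} {A : Finset ℕ}
    (hK : 0 < K) (hA : A ⊆ Finset.Icc 1 (k * K))
    (hcard : ∀ j < k, (A ∩ Finset.Icc (j * K + 1) ((j + 1) * K)).card = 1) :
    ∃ a : ℕ → ℕ, A = (Finset.range k).image a ∧ ∀ j < k, blockIndex K (a j) = j := by
  choose! a ha using fun j hj => Finset.card_eq_one.1 (hcard j hj)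
  have hmem : ∀ j < k, a j ∈ A ∧ a j ∈ block K j := fun j hj => by
    have : a j ∈ A ∩ Finset.Icc (j * K + 1) ((j + 1) * K) := ha j hj ▸ Finset.mem_singleton_self _
    exact ⟨(Finset.mem_inter.1 this).1, Finset.mem_Icc.1 (Finset.mem_inter.1 this).2⟩
  refine ⟨a, Finset.ext fun x => ⟨fun hx => ?_, fun hx => ?_⟩, fun j hj => ?_⟩
  · have hxI := Finset.mem_Icc.1 (hA hx)
    have hj := blockIndex_lt hK hxI
    have hxb := (mem_block_iff_blockIndex_eq hK hxI.1).2 rfl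
    have hxa : x ∈ ({a (blockIndex K x)} : Finset ℕ) :=
      ha _ hj ▸ Finset.mem_inter.2 ⟨hx, Finset.mem_Icc.2 hxb⟩
    exact Finset.mem_image.2 ⟨_, Finset.mem_range.2 hj, (Finset.mem_singleton.1 hxa).symm⟩
  · obtain ⟨j, hj, rfl⟩ := Finset.mem_image.1 hx
    exact (hmem j (Finset.mem_range.1 hj)).1
  · have hpos := (Finset.mem_Icc.1 (hA (hmem j hj).1)).1
    exact (mem_block_iff_blockIndex_eq hK hpos).1 (hmem j hj).2

end IterGraph

/-- `h b x` is the `x`-th of `K` vertices chosen in the block `b ∈ S`: the vertices increase in each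
block, blocks are consecutive, and all vertices lie in `T`. -/
structure IsBlockArrangement (S : Set ℕ) (K : ℕ) (T : Set ℕ) (h : ℕ → ℕ → ℕ) : Prop where
  strictMonoOn : ∀ ⦃b⦄, b ∈ S → StrictMonoOn (h b) (Set.Icc 1 K)
  lt_of_lt : ∀ ⦃b⦄, b ∈ S → ∀ ⦃b'⦄, b' ∈ S → b < b' →
    ∀ ⦃x⦄, x ∈ Set.Icc 1 K → ∀ ⦃y⦄, y ∈ Set.Icc 1 K → h b x < h b' y
  mapsTo : ∀ ⦃b⦄, b ∈ S → Set.MapsTo (h b) (Set.Icc 1 K) T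

/-- The edge that takes, from each block `b ∈ B` of the arrangement `h`, the vertex at position
`w b`. -/
def transversal (h : ℕ → ℕ → ℕ) (w : ℕ → ℕ) (B : Finset ℕ) : Finset ℕ :=
  B.image fun b => h b (w b)

namespace IsBlockArrangement

variable {α : Type*} {c : Finset ℕ → α} {i : α} {S T : Set ℕ} {K R k s : ℕ} {h : ℕ → ℕ → ℕ}

lemma comp {S' : Set ℕ} {e : ℕ → ℕ} (harr : IsBlockArrangement S K T h)
    (he : StrictMonoOn e S') (heS : Set.MapsTo e S' S) :
    IsBlockArrangement S' K T fun j => h (e j) where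
  strictMonoOn _ hb := harr.strictMonoOn (heS hb)
  lt_of_lt _ hb _ hb' hlt := harr.lt_of_lt (heS hb) (heS hb') (he hb hb' hlt)
  mapsTo _ hb := harr.mapsTo (heS hb)

lemma of_mapsTo_block {P : ℕ} (hmono : ∀ b ∈ Set.Icc 1 R, StrictMonoOn (h b) (Set.Icc 1 K))
    (hmaps : ∀ b ∈ Set.Icc 1 R, Set.MapsTo (h b) (Set.Icc 1 K) (block P (b - 1))) :
    IsBlockArrangement (Set.Icc 1 R) K (Set.Icc 1 (R * P)) h where
  strictMonoOn := hmono
  lt_of_lt b hb b' hb' hlt _ hx _ hy :=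
    lt_of_mem_block_of_lt (Nat.sub_lt_sub_right hb.1 hlt) (hmaps b hb hx) (hmaps b' hb' hy)
  mapsTo b hb := (hmaps b hb).mono_right (block_subset_Icc (Nat.sub_one_lt_of_le hb.1 hb.2))

lemma strictMonoOn_concat (harr : IsBlockArrangement (Set.Iio k) K T h) (hK : 0 < K) :
    StrictMonoOn (fun v => h (blockIndex K v) (blockPos K v)) (Set.Icc 1 (k * K)) := by
  intro x hx y hy hxy
  obtain hlt | ⟨heq, hlt⟩ := blockIndex_lt_or_blockPos_lt (K := K) hx.1 hxy
  · exact harr.lt_of_lt (blockIndex_lt hK hx) (blockIndex_lt hK hy) hlt (blockPos_mem hK)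
      (blockPos_mem hK)
  · simp only [heq]
    exact harr.strictMonoOn (blockIndex_lt hK hy) (blockPos_mem hK) (blockPos_mem hK) hlt

lemma isMonochromaticCopy_iterGraph_succ (harr : IsBlockArrangement (Set.Iio k) (k ^ s) T h)
    (hk : 0 < k) (hblock : ∀ j < k, ∀ A ∈ (iterGraph k s).edges, c (A.image (h j)) = i)
    (htrans : ∀ w : ℕ → ℕ, (∀ j, w j ∈ Set.Icc 1 (k ^ s)) →
      c (transversal h w (Finset.range k)) = i) :
    IsMonochromaticCopy c T i (iterGraph k (s + 1))
      fun v => h (blockIndex (k ^ s) v) (blockPos (k ^ s) v) := by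
  have hK : 0 < k ^ s := Nat.pow_pos hk
  refine ⟨?_, ?_, fun A hA => ?_⟩
  · rw [iterGraph_n, pow_succ']
    exact harr.strictMonoOn_concat hK
  · rw [iterGraph_n, pow_succ']
    exact fun v hv => harr.mapsTo (blockIndex_lt hK hv) (blockPos_mem hK)
  · obtain ⟨j, hj, A', hA', rfl⟩ | ⟨hA, hcard⟩ := mem_iterGraph_succ_edges.1 hA
    · rw [Finset.image_image, ← hblock j hj A' hA']
      refine congrArg c (Finset.image_congr fun x hx => ?_)
      have hA'n := (Finset.mem_powersetCard.1 (iterGraph_isUniform k s A' hA')).1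
      have hxI := Finset.mem_Icc.1 (hA'n hx)
      rw [iterGraph_n] at hxI
      simp only [Function.comp_apply, blockIndex_add_mul hxI, blockPos_add_mul hxI]
    · obtain ⟨a, rfl, ha⟩ := exists_eq_image_range_of_card_inter_block hK
        (Finset.mem_powersetCard.1 hA).1 hcard
      rw [← htrans (fun j => blockPos (k ^ s) (a j)) fun _ => blockPos_mem hK, Finset.image_image]
      refine congrArg c (Finset.image_congr fun j hj => ?_)
      simp only [Function.comp_apply, ha j (Finset.mem_range.1 hj)]

lemma exists_copy_iterGraph_succ (harr : IsBlockArrangement S (k ^ s) T h) (hk : 0 < k)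
    (hblock : ∀ b ∈ S, ∀ A ∈ (iterGraph k s).edges, c (A.image (h b)) = i)
    {B : Finset ℕ} (hBS : ↑B ⊆ S) (hBk : B.card = k)
    (htrans : ∀ w : ℕ → ℕ, (∀ b, w b ∈ Set.Icc 1 (k ^ s)) → c (transversal h w B) = i) :
    ∃ f, IsMonochromaticCopy c T i (iterGraph k (s + 1)) f := by
  let e : ℕ → ℕ := Nat.nth (· ∈ B)
  have hfin : {b | b ∈ B}.Finite := B.finite_toSet
  have hcard : hfin.toFinset.card = k := by simpa using hBk
  have hemono : StrictMonoOn e (Set.Iio k) := hcard ▸ Nat.nth_strictMonoOn hfin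
  have heB : Set.MapsTo e (Set.Iio k) B := fun j hj =>
    Nat.nth_mem_of_lt_card hfin (hcard.symm ▸ hj)
  have heimage : (Finset.range k).image e = B := by
    rw [← Finset.coe_inj, Finset.coe_image, Finset.coe_range, ← hcard]
    exact Nat.image_nth_Iio_card hfin
  refine ⟨_, (harr.comp hemono (heB.mono_right hBS)).isMonochromaticCopy_iterGraph_succ hk
    (fun j hj => hblock _ (hBS (heB hj))) fun w hw => ?_⟩
  have hcount : ∀ j < k, Nat.count (· ∈ B) (e j) = j := fun j hj =>
    Nat.count_nth_of_lt_card_finite hfin (hcard.symm ▸ hj)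
  have hreindex : transversal (fun j => h (e j)) w (Finset.range k) =
      transversal h (fun b => w (Nat.count (· ∈ B) b)) B :=
    calc
      _ = (Finset.range k).image fun j => h (e j) (w (Nat.count (· ∈ B) (e j))) :=
        Finset.image_congr fun j hj => by simp only [hcount j (Finset.mem_range.1 hj)]
      _ = ((Finset.range k).image e).image fun b => h b (w (Nat.count (· ∈ B) b)) := by
        rw [Finset.image_image, Function.comp_def]
      _ = _ := by rw [heimage, transversal]
  exact hreindex ▸ htrans _ fun _ => hw _

end IsBlockArrangement

lemma exists_edge_selector {E : Finset (Finset ℕ)}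
    (hE : ∀ A ∈ E, ∀ B ∈ E, A ≠ B → Disjoint A B) :
    ∃ F : ℕ → Finset ℕ, ∀ A ∈ E, ∀ v ∈ A, F v = A := by
  have hF : ∀ v, ∃ F : Finset ℕ, ∀ A ∈ E, v ∈ A → F = A := fun v => by
    by_cases hv : ∃ A ∈ E, v ∈ A
    · obtain ⟨A, hA, hvA⟩ := hv
      refine ⟨A, fun B hB hvB => ?_⟩
      by_contra hne
      exact Finset.disjoint_left.1 (hE A hA B hB hne) hvA hvB
    · exact ⟨∅, fun A hA hvA => absurd ⟨A, hA, hvA⟩ hv⟩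
  choose F hF using hF
  exact ⟨F, fun A hA v hv => hF v A hA hv⟩

namespace IsBlockArrangement

variable {S T : Set ℕ} {K R k : ℕ} {h : ℕ → ℕ → ℕ}

lemma exists_copy_of_disjoint_edges {α : Type*} {c : Finset ℕ → α} {i : α} {G : OrderedHypergraph}
    {φ : ℕ → ℕ} (harr : IsBlockArrangement S K T h)
    (hG : ∀ A ∈ G.edges, ∀ B ∈ G.edges, A ≠ B → Disjoint A B)
    (hφ : StrictMonoOn φ (Set.Icc 1 G.n)) (hφS : Set.MapsTo φ (Set.Icc 1 G.n) S)
    {w : Finset ℕ → ℕ → ℕ} (hw : ∀ A b, w A b ∈ Set.Icc 1 K)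
    (hc : ∀ A ∈ G.edges, c (transversal h (w A) (A.image φ)) = i) :
    ∃ f, IsMonochromaticCopy c T i G f := by
  obtain ⟨F, hF⟩ := exists_edge_selector hG
  refine ⟨fun v => h (φ v) (w (F v) (φ v)), fun x hx y hy hxy => ?_, fun v hv => ?_, fun A hA => ?_⟩
  · exact harr.lt_of_lt (hφS hx) (hφS hy) (hφ hx hy hxy) (hw _ _) (hw _ _)
  · exact harr.mapsTo (hφS hv) (hw _ _)
  · rw [← hc A hA, transversal, Finset.image_image]
    refine congrArg c (Finset.image_congr fun v hv => ?_)
    simp only [Function.comp_apply, hF A hA v hv]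

lemma exists_copy_matching {u : ℕ} {c : Finset ℕ → Fin (u + 1)} {M : Fin u → OrderedHypergraph}
    (harr : IsBlockArrangement (Set.Icc 1 R) K T h) (hK : 0 < K) (hu : 0 < u)
    (hM : ∀ i, IsOrderedMatching k (M i)) (hR : IsRamsey M R)
    (hc : ∀ B ∈ Finset.powersetCard k (Finset.Icc 1 R),
      ∃ w : ℕ → ℕ, (∀ b, w b ∈ Set.Icc 1 K) ∧ c (transversal h w B) ≠ 0) :
    ∃ i f, IsMonochromaticCopy c T (Fin.succ i) (M i) f := by
  have hcolor : ∀ B : Finset ℕ, ∃ (w : ℕ → ℕ) (i : Fin u), (∀ b, w b ∈ Set.Icc 1 K) ∧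
      (B ∈ Finset.powersetCard k (Finset.Icc 1 R) → c (transversal h w B) = i.succ) := fun B => by
    by_cases hB : B ∈ Finset.powersetCard k (Finset.Icc 1 R)
    · obtain ⟨w, hw, hwc⟩ := hc B hB
      obtain ⟨i, hi⟩ := Fin.exists_succ_eq.2 hwc
      exact ⟨w, i, hw, fun _ => hi.symm⟩
    · exact ⟨fun _ => 1, ⟨0, hu⟩, fun _ => ⟨le_rfl, hK⟩, fun hB' => absurd hB' hB⟩
  choose w c' hw hwc using hcolor
  obtain ⟨i, φ, hφ⟩ := hR c'
  refine ⟨i, harr.exists_copy_of_disjoint_edges (hM i).2 hφ.strictMonoOn hφ.mapsTo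
    (w := fun A => w (A.image φ)) (fun _ => hw _) fun A hA => ?_⟩
  rw [← hφ.color_eq A hA]
  exact hwc _ (image_mem_powersetCard_Icc hφ.strictMonoOn hφ.mapsTo ((hM i).isUniform A hA))

end IsBlockArrangement

section Induction

variable {k s u R P : ℕ} {M : Fin u → OrderedHypergraph}

lemma isRamsey_cons_iterGraph_zero (k : ℕ) (M : Fin u → OrderedHypergraph) :
    IsRamsey (Fin.cons (iterGraph k 0) M : Fin (u + 1) → OrderedHypergraph) 1 := fun _ =>
  ⟨0, id, strictMono_id.strictMonoOn _, Set.mapsTo_id _, by simp [iterGraph_zero_edges]⟩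

lemma IsRamsey.cons_iterGraph_succ (hk : 0 < k) (hu : 0 < u)
    (hM : ∀ i, IsOrderedMatching k (M i)) (hR : IsRamsey M R)
    (hP : IsRamsey (Fin.cons (iterGraph k s) M : Fin (u + 1) → OrderedHypergraph) P) :
    IsRamsey (Fin.cons (iterGraph k (s + 1)) M : Fin (u + 1) → OrderedHypergraph) (R * P) := by
  intro c
  by_cases hcopy : ∃ i f, IsMonochromaticCopy c (Set.Icc 1 (R * P)) (Fin.succ i) (M i) f
  · obtain ⟨i, f, hf⟩ := hcopy
    exact ⟨i.succ, f, hf⟩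
  have hblock : ∀ b ∈ Set.Icc 1 R,
      ∃ g, IsMonochromaticCopy c (block P (b - 1)) 0 (iterGraph k s) g := fun b hb => by
    obtain ⟨i, g, hg⟩ := hP.exists_copy_block c (b - 1)
    cases i using Fin.cases with
    | zero => exact ⟨g, hg⟩
    | succ i =>
      have hsub := block_subset_Icc (K := P) (Nat.sub_one_lt_of_le hb.1 hb.2)
      exact absurd ⟨i, g, hg.mono hsub⟩ hcopy
  choose! g hg using hblock
  have harr : IsBlockArrangement (Set.Icc 1 R) (k ^ s) (Set.Icc 1 (R * P)) g :=
    .of_mapsTo_block (fun b hb => iterGraph_n k s ▸ (hg b hb).strictMonoOn)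
      fun b hb => iterGraph_n k s ▸ (hg b hb).mapsTo
  by_cases htrans : ∃ B ∈ Finset.powersetCard k (Finset.Icc 1 R), ∀ w : ℕ → ℕ,
      (∀ b, w b ∈ Set.Icc 1 (k ^ s)) → c (transversal g w B) = 0
  · obtain ⟨B, hB, hw⟩ := htrans
    obtain ⟨hBR, hBk⟩ := Finset.mem_powersetCard.1 hB
    exact ⟨0, harr.exists_copy_iterGraph_succ hk (fun b hb => (hg b hb).color_eq)
      (fun b hb => Finset.mem_Icc.1 (hBR hb)) hBk hw⟩
  · push Not at htrans
    exact absurd (harr.exists_copy_matching (Nat.pow_pos hk) hu hM hR htrans) hcopy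

lemma IsRamsey.cons_iterGraph (hk : 0 < k) (hu : 0 < u) (hM : ∀ i, IsOrderedMatching k (M i))
    (hR : IsRamsey M R) (s : ℕ) :
    IsRamsey (Fin.cons (iterGraph k s) M : Fin (u + 1) → OrderedHypergraph) (R ^ s) := by
  induction s with
  | zero => exact isRamsey_cons_iterGraph_zero k M
  | succ s ih => exact pow_succ' R s ▸ hR.cons_iterGraph_succ hk hu hM ih

end Induction

/-- For `k ≥ 2`, `s ≥ 0`, `t = u+1 ≥ 2`, and arbitrary ordered
`k`-uniform matchings `M_2, …, M_t`,
`OR(G_s^k, M_2, …, M_t) ≤ OR(M_2, …, M_t)^s`. -/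
theorem ordered_ramsey_iterGraph_matchings (k s u : ℕ) (hk : 2 ≤ k) (hu : 1 ≤ u)
    (M : Fin u → OrderedHypergraph) (hM : ∀ i, IsOrderedMatching k (M i)) :
    ORnum k (Fin.cons (iterGraph k s) M) ≤ (ORnum k M) ^ s := by
  have hk0 : 0 < k := by omega
  have hMunif : ∀ i, IsUniform k (M i) := fun i => (hM i).isUniform
  rw [ORnum_eq_sInf_isRamsey (Fin.cons (iterGraph_isUniform k s) hMunif),
    ORnum_eq_sInf_isRamsey hMunif]
  rcases Set.eq_empty_or_nonempty {N | IsRamsey M N} with hempty | hne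
  · cases s with
    | zero => exact Nat.sInf_le (isRamsey_cons_iterGraph_zero k M)
    | succ s =>
      -- With no Ramsey number for `M` there is none for the longer list either, and `sInf ∅ = 0`.
      have hempty' : {N | IsRamsey (Fin.cons (iterGraph k (s + 1)) M :
          Fin (u + 1) → OrderedHypergraph) N} = ∅ :=
        Set.subset_eq_empty (fun _ h => h.of_cons (iterGraph_succ_edges_nonempty hk0 s)) hempty
      simp only [hempty', Nat.sInf_empty, zero_le]
  · exact Nat.sInf_le (IsRamsey.cons_iterGraph hk0 hu hM (Nat.sInf_mem hne) s)
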